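/- arXiv:0911.0354 — 2 statements merged into one kernel-verified Lean document; each statement's English description precedes it below -/
import Mathlib

section
/- Let (W,S) be a Coxeter system with S finite and let (s,w) be a base. Then the support J of (s,w) is irreducible and tree-2-spherical, i.e. every pair of elements of J generates a finite subgroup and the graph on J whose edges are the pairs {j,j'} with the order of jj' at least 3 is a forest. -/
variable {B : Type*} {W : Type*} [Group W] {M : CoxeterMatrix B}

/-- A subset `J` of the index set is *spherical* if the corresponding simple reflections
generate a finite subgroup. -/
def Spherical (cs : CoxeterSystem M W) (J : Set B) : Prop :=
  (Subgroup.closure (cs.simple '' J) : Set W).Finite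

/-- Two indices are *adjacent* if the corresponding simple reflections generate a finite
subgroup. -/
def Adjacent (cs : CoxeterSystem M W) (i j : B) : Prop :=
  (Subgroup.closure {cs.simple i, cs.simple j} : Set W).Finite

/-- A subset is *2-spherical* if every pair of its elements is adjacent. -/
def TwoSpherical (cs : CoxeterSystem M W) (J : Set B) : Prop :=
  ∀ i ∈ J, ∀ j ∈ J, Adjacent cs i j

/-- A subset is *irreducible* if it cannot be partitioned into two nonempty subsets whose
corresponding simple reflections commute elementwise. -/
def IrreducibleSubset (cs : CoxeterSystem M W) (J : Set B) : Prop :=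
  ¬ ∃ K L : Set B, K.Nonempty ∧ L.Nonempty ∧ Disjoint K L ∧ K ∪ L = J ∧
      ∀ k ∈ K, ∀ l ∈ L, Commute (cs.simple k) (cs.simple l)

/-- `perpIn cs T J` is the set `J⊥` of elements of `T ∖ J` whose simple reflections commute
with those of every element of `J`. -/
def perpIn (cs : CoxeterSystem M W) (T J : Set B) : Set B :=
  {i ∈ T \ J | ∀ j ∈ J, Commute (cs.simple i) (cs.simple j)}

/-- A subset `T` of the index set is *connected* if any two of its elements are joined by a
path inside `T` whose edges are adjacent pairs. -/
def ConnectedIn (cs : CoxeterSystem M W) (T : Set B) : Prop :=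
  ∀ a ∈ T, ∀ b ∈ T,
    Relation.ReflTransGen (fun x y => x ∈ T ∧ y ∈ T ∧ Adjacent cs x y) a b

/-- A subset `T` is *twist-rigid* if for every irreducible spherical subset `L ⊆ T` the set
`T ∖ (L ∪ L⊥)` is connected, where `L⊥` is taken inside `T`. -/
def TwistRigidIn (cs : CoxeterSystem M W) (T : Set B) : Prop :=
  ∀ L ⊆ T, IrreducibleSubset cs L → Spherical cs L →
    ConnectedIn cs (T \ (L ∪ perpIn cs T L))

/-- A pair `(s, w)` is a *base* if `ℓ(w⁻¹ s w) = 2 ℓ(w) + 1` and every reflection `t` with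
`ℓ(t w) < ℓ(w)` generates together with `s` a finite subgroup. -/
def IsBase (cs : CoxeterSystem M W) (s : B) (w : W) : Prop :=
  cs.length (w⁻¹ * cs.simple s * w) = 2 * cs.length w + 1 ∧
    ∀ t : W, cs.IsReflection t → cs.length (t * w) < cs.length w →
      (Subgroup.closure {cs.simple s, t} : Set W).Finite

/-- `J` is the *support* of `(s, w)` if it is the smallest subset of the index set containing
`s` with `w ∈ W_J`. -/
def IsSupport (cs : CoxeterSystem M W) (s : B) (w : W) (J : Set B) : Prop :=
  s ∈ J ∧ w ∈ Subgroup.closure (cs.simple '' J) ∧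
    ∀ J' : Set B, s ∈ J' → w ∈ Subgroup.closure (cs.simple '' J') → J ⊆ J'

/-- A base `(s, w)` is *simple* if `w` is represented by a reduced word whose letters are
pairwise distinct and distinct from `s`. -/
def IsSimpleBase (cs : CoxeterSystem M W) (s : B) (w : W) : Prop :=
  IsBase cs s w ∧ ∃ l : List B, w = cs.wordProd l ∧ cs.length w = l.length ∧
    l.Nodup ∧ s ∉ l

/-- The *shadow* of a base `(s, w)` with support `J`: the set of `j ∈ J` with
`ℓ((wj)⁻¹ s (wj)) ≤ ℓ(w⁻¹ s w)`. -/
def shadow (cs : CoxeterSystem M W) (s : B) (w : W) (J : Set B) : Set B :=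
  {j ∈ J | cs.length ((w * cs.simple j)⁻¹ * cs.simple s * (w * cs.simple j)) ≤
    cs.length (w⁻¹ * cs.simple s * w)}

/-!
In Tits' geometric representation the simple roots `α_i` form a basis, and a base `(s, w)` gives a
positive root `β = w⁻¹ α_s`. Build `w` letter by letter from the left. If `β` belongs to the base
`(s, v)` and `(s, v s_j)` is a base as well, then the next root is `s_j β = β - 2 ⟨α_j, β⟩ α_j`, and
`-1 < ⟨α_j, β⟩ < 0`: the lower bound holds because `s` and the reflection `v s_j v⁻¹` generate a
finite group, the upper bound because conjugation by `s_j` lengthens the reflection `v⁻¹ s v`. Hence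
the nonzero coordinates of the root never drop below `1`. If `j` is new, then `⟨α_j, β⟩` is at most
the sum of the entries `-cos(π / m_{ij})` over the support of `β`. Each edge of the Coxeter graph
contributes at most `-1/2`, and an edge labelled `∞` contributes `-1`, so `j` is joined to exactly
one vertex of the support, by an edge of finite label. The support of the root is therefore a tree
with finite labels, and it is the support of the base.
-/

noncomputable section

open Real Polynomial.Chebyshev

section Reflections

variable {E : Type*} [AddCommGroup E]

theorem reflection_mul_reflection_pow_eq_one [Module ℝ E] {x y : E} {f g : Module.Dual ℝ E}
    (hf : f x = 2) (hg : g y = 2) {m : ℕ} (hm : 3 ≤ m) (h : f y * g x = 4 * cos (π / m) ^ 2) :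
    (Module.reflection hf * Module.reflection hg) ^ m = 1 := by
  set φ : ℝ := 2 * (π / m) with hφ
  have hmφ : m * φ = 2 * π := by rw [hφ]; field_simp
  have hsin : sin φ ≠ 0 := by
    have hm' : (3 : ℝ) ≤ m := by exact_mod_cast hm
    refine (sin_pos_of_pos_of_lt_pi (by positivity) ?_).ne'
    nlinarith [pi_pos]
  have ht : 2 * cos φ = f y * g x - 2 := by rw [h, hφ, cos_two_mul]; ring
  ext1 z
  rw [Module.reflection_mul_reflection_pow_apply hf hg m z (2 * cos φ) ht]
  obtain ⟨k, rfl | rfl⟩ := Nat.even_or_odd' m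
  · have hS : (S ℝ (k - 1)).eval (2 * cos φ) = 0 := by
      refine (mul_eq_zero.1 ?_).resolve_right hsin
      rw [S_two_mul_real_cos, ← sin_pi]
      congr 1
      push_cast at hmφ ⊢
      linarith
    have h₁ : ((2 * k : ℕ) - 1 : ℤ) / 2 = k - 1 := by omega
    have h₂ : ((2 * k : ℕ) - 2 : ℤ) / 2 = k - 1 := by omega
    rw [h₁, h₂, hS]
    simp
  · have hS : (S ℝ k).eval (2 * cos φ) + (S ℝ (k - 1)).eval (2 * cos φ) = 0 := by
      refine (mul_eq_zero.1 ?_).resolve_right hsin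
      have hk : ((k : ℤ) + 1) * φ = 2 * π - ((k - 1 : ℤ) + 1) * φ := by
        push_cast at hmφ ⊢
        linarith
      rw [add_mul, S_two_mul_real_cos, S_two_mul_real_cos, hk, sin_two_pi_sub]
      ring
    have h₁ : ((2 * k + 1 : ℕ) - 1 : ℤ) / 2 = k := by omega
    have h₂ : ((2 * k + 1 : ℕ) - 2 : ℤ) / 2 = k - 1 := by omega
    have h₃ : ((2 * k + 1 : ℕ) - 3 : ℤ) / 2 = k - 1 := by omega
    have h₄ : ((2 * k + 1 : ℕ) : ℤ) / 2 = k := by omega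
    rw [h₁, h₂, h₃, h₄, hS]
    simp

variable {𝕜 : Type*} [Field 𝕜] [LinearOrder 𝕜] [IsStrictOrderedRing 𝕜] [Module 𝕜 E]
  {x y : E} {f g : Module.Dual 𝕜 E}

theorem exists_reflection_mul_reflection_pow_apply_eq (hf : f x = 2) (hg : g y = 2)
    (hfy : f y ≤ -2) (hgx : g x ≤ -2) (n : ℕ) :
    ∃ a b : 𝕜, ((Module.reflection hf * Module.reflection hg) ^ n) x = a • x + b • y ∧
      n ≤ b ∧ b + 1 ≤ a := by
  induction n with
  | zero => exact ⟨1, 0, by simp⟩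
  | succ n ih =>
    obtain ⟨a, b, h, hb, hba⟩ := ih
    have ha : 0 ≤ a := by linarith [n.cast_nonneg (α := 𝕜)]
    have hb' : a + 1 ≤ -g x * a - b := by linarith [mul_le_mul_of_nonneg_right hgx ha]
    refine ⟨-f y * (-g x * a - b) - a, -g x * a - b, ?_, by push_cast; linarith, by nlinarith⟩
    rw [pow_succ', LinearEquiv.mul_apply, h, LinearEquiv.mul_apply]
    simp only [Module.reflection_apply, map_add, map_sub, map_smul, hf, hg]
    module

theorem mem_span_singleton_of_isOfFinOrder_reflection_mul_reflection (hf : f x = 2) (hg : g y = 2)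
    (hfy : f y ≤ -2) (hgx : g x ≤ -2)
    (h : IsOfFinOrder (Module.reflection hf * Module.reflection hg)) :
    y ∈ Submodule.span 𝕜 {x} := by
  obtain ⟨n, hn, hpow⟩ := isOfFinOrder_iff_pow_eq_one.1 h
  obtain ⟨a, b, hab, hb, -⟩ := exists_reflection_mul_reflection_pow_apply_eq hf hg hfy hgx n
  have hb0 : b ≠ 0 := ((Nat.cast_pos.2 hn).trans_le hb).ne'
  rw [hpow, LinearEquiv.coe_one, id_eq, ← sub_eq_iff_eq_add'] at hab
  rw [← Submodule.smul_mem_iff _ hb0, ← hab]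
  exact sub_mem (Submodule.mem_span_singleton_self x)
    (Submodule.smul_mem _ a (Submodule.mem_span_singleton_self x))

end Reflections

theorem chebyshevU_eval_cos_nonneg {n : ℕ} {θ : ℝ} (hθ : 0 ≤ θ) (h : (n + 1) * θ ≤ π) :
    0 ≤ (U ℝ n).eval (cos θ) := by
  rcases n.eq_zero_or_pos with rfl | hn
  · simp
  rcases hθ.eq_or_lt with rfl | hθ
  · rw [cos_zero, U_eval_one]
    positivity
  have hn' : (1 : ℝ) ≤ n := by exact_mod_cast hn
  have hsin : 0 < sin θ := sin_pos_of_pos_of_lt_pi hθ (by nlinarith)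
  refine nonneg_of_mul_nonneg_left ?_ hsin
  rw [U_real_cos]
  exact sin_nonneg_of_nonneg_of_le_pi (by positivity) (by exact_mod_cast h)

theorem chebyshevU_eval_cos_pi_div_nonneg {n m : ℕ} (h : m = 0 ∨ n + 1 ≤ m) :
    0 ≤ (U ℝ n).eval (cos (π / m)) := by
  refine chebyshevU_eval_cos_nonneg (by positivity) ?_
  rcases h with rfl | h
  · simp [pi_nonneg]
  · rw [mul_div_left_comm]
    exact mul_le_of_le_one_right pi_nonneg (div_le_one_of_le₀ (by exact_mod_cast h) m.cast_nonneg)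

theorem finite_closure_pair_of_isOfFinOrder_mul {G : Type*} [Group G] {a b : G} (ha : a * a = 1)
    (hb : b * b = 1) (hab : IsOfFinOrder (a * b)) : (Subgroup.closure {a, b} : Set G).Finite := by
  have ha' : a⁻¹ = a := inv_eq_of_mul_eq_one_left ha
  have hb' : b⁻¹ = b := inv_eq_of_mul_eq_one_left hb
  set N := Subgroup.zpowers (a * b)
  have hnorm : Subgroup.zpowers a ≤ Subgroup.normalizer (N : Set G) := by
    rw [Subgroup.zpowers_le, Subgroup.mem_normalizer_iff_map_conj_eq, MonoidHom.map_zpowers,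
      ← Subgroup.zpowers_inv]
    simp [N, ← mul_assoc, ha', hb', ha]
  have hle : Subgroup.closure {a, b} ≤ Subgroup.zpowers a ⊔ N := by
    have haN : a ∈ Subgroup.zpowers a ⊔ N := Subgroup.mem_sup_left (Subgroup.mem_zpowers a)
    have hbN := mul_mem haN (Subgroup.mem_sup_right (Subgroup.mem_zpowers (a * b)))
    rw [← mul_assoc, ha, one_mul] at hbN
    exact (Subgroup.closure_le _).2 (Set.pair_subset haN hbN)
  have haf : IsOfFinOrder a := isOfFinOrder_iff_pow_eq_one.2 ⟨2, two_pos, by rw [pow_two, ha]⟩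
  refine Set.Finite.subset ?_ hle
  rw [Subgroup.coe_mul_of_left_le_normalizer_right _ _ hnorm]
  exact (finite_zpowers.2 haf).mul (finite_zpowers.2 hab)

theorem isOfFinOrder_mul_of_finite_closure_pair {G : Type*} [Group G] {a b : G}
    (h : (Subgroup.closure {a, b} : Set G).Finite) : IsOfFinOrder (a * b) := by
  have : Finite (Subgroup.closure {a, b}) := h
  have hmem : a * b ∈ Subgroup.closure {a, b} :=
    mul_mem (Subgroup.subset_closure (by simp)) (Subgroup.subset_closure (by simp))
  exact Submonoid.isOfFinOrder_coe.2 (isOfFinOrder_of_finite (⟨_, hmem⟩ : Subgroup.closure {a, b}))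

theorem adjacent_of_ne_zero (cs : CoxeterSystem M W) {i j : B} (h : M i j ≠ 0) :
    Adjacent cs i j :=
  finite_closure_pair_of_isOfFinOrder_mul (cs.simple_mul_simple_self i)
    (cs.simple_mul_simple_self j) <|
    isOfFinOrder_iff_pow_eq_one.2 ⟨M i j, h.bot_lt, cs.simple_mul_simple_pow i j⟩

section Graph

open SimpleGraph

variable {V : Type*} {G : SimpleGraph V}

theorem isAcyclic_induce_insert {K : Set V} {j : V} (hK : (G.induce K).IsAcyclic)
    (huniq : ∀ i ∈ K, ∀ k ∈ K, G.Adj j i → G.Adj j k → i = k) :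
    (G.induce (insert j K)).IsAcyclic := by
  classical
  intro v c hc
  set p := c.map (Embedding.induce (insert j K)).toHom
  have hp : p.IsCycle :=
    (Walk.isCycle_map_iff_of_injective (Embedding.induce (G := G) _).injective).2 hc
  have hmem : ∀ u ∈ p.support, u ∈ insert j K := by
    intro u hu
    rw [Walk.support_map, List.mem_map] at hu
    obtain ⟨u, -, rfl⟩ := hu
    exact u.2
  by_cases hj : j ∈ p.support
  · set q := p.rotate j hj
    have hq : q.IsCycle := hp.rotate hj
    have hqK : ∀ u ∈ q.support, G.Adj j u → u ∈ K := fun u hu hju =>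
      (hmem u ((p.mem_support_rotate_iff j hj).1 hu)).resolve_left hju.ne'
    have hsnd := q.adj_snd hq.not_nil
    have hpen := (q.adj_penultimate hq.not_nil).symm
    exact hq.snd_ne_penultimate <| huniq _ (hqK _ (q.getVert_mem_support _) hsnd) _
      (hqK _ (q.getVert_mem_support _) hpen) hsnd hpen
  · have hpK : ∀ u ∈ p.support, u ∈ K := fun u hu =>
      (hmem u hu).resolve_left fun h => hj (h ▸ hu)
    refine hK (p.induce K hpK) ?_
    rw [← Walk.isCycle_map_iff_of_injective (f := (Embedding.induce (G := G) K).toHom)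
      (Embedding.induce (G := G) K).injective]
    rwa [Walk.map_induce]

theorem isTree_induce_insert {K : Set V} {i j : V} (hK : (G.induce K).IsTree) (hi : i ∈ K)
    (hji : G.Adj j i) (huniq : ∀ k ∈ K, G.Adj j k → k = i) :
    (G.induce (insert j K)).IsTree where
  connected := by
    have hpair := induce_union_connected (induce_pair_connected_of_adj hji).preconnected
      hK.connected.preconnected ⟨i, by simp, hi⟩
    rwa [Set.insert_union, Set.singleton_union, Set.insert_eq_of_mem hi] at hpair
  isAcyclic := isAcyclic_induce_insert hK.isAcyclic fun k hk l hl hjk hjl =>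
    (huniq k hk hjk).trans (huniq l hl hjl).symm

end Graph

section TitsForm

/-- The entry `-cos(π / M i j)` of the Tits form. Mathlib encodes `M i j = ∞` by `0`, and then the
convention `π / 0 = 0` produces the customary entry `-1`. -/
def titsEntry (M : CoxeterMatrix B) (i j : B) : ℝ :=
  -cos (π / M i j)

theorem titsEntry_symm (i j : B) : titsEntry M i j = titsEntry M j i := by
  rw [titsEntry, M.symmetric, titsEntry]

theorem titsEntry_self (i : B) : titsEntry M i i = 1 := by
  simp [titsEntry]

theorem titsEntry_of_eq_zero {i j : B} (h : M i j = 0) : titsEntry M i j = -1 := by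
  simp [titsEntry, h]

theorem titsEntry_of_eq_two {i j : B} (h : M i j = 2) : titsEntry M i j = 0 := by
  simp [titsEntry, h]

theorem titsEntry_le_neg_half {i j : B} (hij : i ≠ j) (h : M i j ≠ 2) :
    titsEntry M i j ≤ -(1 / 2) := by
  have hone : M i j ≠ 1 := M.off_diagonal i j hij
  rcases (M i j).eq_zero_or_pos with hzero | hpos
  · rw [titsEntry_of_eq_zero hzero]
    norm_num
  · have hthree : (3 : ℝ) ≤ M i j := by exact_mod_cast (by omega : 3 ≤ M i j)
    have hcos : cos (π / 3) ≤ cos (π / M i j) :=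
      cos_le_cos_of_nonneg_of_le_pi (by positivity) (by linarith [pi_pos]) (by gcongr)
    rw [cos_pi_div_three] at hcos
    exact neg_le_neg hcos

theorem titsEntry_nonpos {i j : B} (hij : i ≠ j) : titsEntry M i j ≤ 0 := by
  by_cases h : M i j = 2
  · exact (titsEntry_of_eq_two h).le
  · linarith [titsEntry_le_neg_half hij h]

/-- The basis vectors of the geometric representation, indexed by the simple reflections. -/
abbrev simpleRoot (i : B) : B →₀ ℝ :=
  Finsupp.single i 1

/-- The Tits form, the bilinear form on `B →₀ ℝ` whose values on the simple roots are the
`titsEntry`s. -/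
def titsForm (M : CoxeterMatrix B) : LinearMap.BilinForm ℝ (B →₀ ℝ) :=
  Finsupp.linearCombination ℝ fun i => Finsupp.linearCombination ℝ (titsEntry M i)

theorem titsForm_simpleRoot (i : B) (x : B →₀ ℝ) :
    titsForm M (simpleRoot i) x = x.sum fun j c => c * titsEntry M i j := by
  simp [titsForm, Finsupp.linearCombination_apply]

theorem titsForm_simpleRoot_simpleRoot (i j : B) :
    titsForm M (simpleRoot i) (simpleRoot j) = titsEntry M i j := by
  simp [titsForm_simpleRoot]

theorem titsForm_simpleRoot_self (i : B) : titsForm M (simpleRoot i) (simpleRoot i) = 1 := by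
  rw [titsForm_simpleRoot_simpleRoot, titsEntry_self]

theorem titsForm_comm (x y : B →₀ ℝ) : titsForm M x y = titsForm M y x := by
  have h : titsForm M = (titsForm M).flip := by
    ext i j
    simpa [titsForm_simpleRoot_simpleRoot] using titsEntry_symm i j
  exact LinearMap.congr_fun₂ h x y

theorem two_smul_titsForm_apply_self {x : B →₀ ℝ} (hx : titsForm M x x = 1) :
    ((2 : ℝ) • titsForm M x) x = 2 := by
  simp [hx]

/-- The orthogonal reflection with respect to the Tits form in a vector of norm one. -/
def titsReflection {x : B →₀ ℝ} (hx : titsForm M x x = 1) : (B →₀ ℝ) ≃ₗ[ℝ] (B →₀ ℝ) :=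
  Module.reflection (two_smul_titsForm_apply_self hx)

theorem titsReflection_apply {x : B →₀ ℝ} (hx : titsForm M x x = 1) (y : B →₀ ℝ) :
    titsReflection hx y = y - (2 * titsForm M x y) • x :=
  Module.reflection_apply _ _

theorem titsReflection_mul_self {x : B →₀ ℝ} (hx : titsForm M x x = 1) :
    titsReflection hx * titsReflection hx = 1 :=
  LinearEquiv.ext (Module.involutive_reflection (two_smul_titsForm_apply_self hx))

theorem titsReflection_mul_titsReflection_pow_eq_one {x y : B →₀ ℝ} (hx : titsForm M x x = 1)
    (hy : titsForm M y y = 1) {m : ℕ} (hm : 3 ≤ m) (h : titsForm M x y = -cos (π / m)) :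
    (titsReflection hx * titsReflection hy) ^ m = 1 := by
  refine reflection_mul_reflection_pow_eq_one (two_smul_titsForm_apply_self hx)
    (two_smul_titsForm_apply_self hy) hm ?_
  rw [LinearMap.smul_apply, LinearMap.smul_apply, titsForm_comm y x, h, smul_eq_mul]
  ring

theorem titsForm_titsReflection {x : B →₀ ℝ} (hx : titsForm M x x = 1) (y z : B →₀ ℝ) :
    titsForm M (titsReflection hx y) (titsReflection hx z) = titsForm M y z := by
  simp only [titsReflection_apply, map_sub, map_smul, LinearMap.sub_apply, LinearMap.smul_apply,
    hx, titsForm_comm y x, smul_eq_mul]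
  ring

theorem eq_simpleRoot_of_forall_ne {i : B} {x : B →₀ ℝ} (hx : 0 ≤ x) (hxx : titsForm M x x = 1)
    (h : ∀ k ≠ i, x k = 0) : x = simpleRoot i := by
  have hsmul : x = x i • simpleRoot i := by
    ext k
    rcases eq_or_ne k i with rfl | hk
    · simp
    · simp [h k hk, hk]
  have hsq : x i ^ 2 = 1 := by
    rw [hsmul, map_smul, map_smul, LinearMap.smul_apply, titsForm_simpleRoot_self] at hxx
    simpa only [smul_eq_mul, mul_one, ← pow_two] using hxx
  rw [hsmul, (pow_eq_one_iff_of_nonneg (hx i) two_ne_zero).1 hsq, one_smul]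

end TitsForm

section GeometricRepresentation

open CoxeterSystem

/-- The reflection in the `i`-th simple root, which is the action of the `i`-th generator in the
geometric representation. -/
def simpleReflection (M : CoxeterMatrix B) (i : B) : (B →₀ ℝ) ≃ₗ[ℝ] (B →₀ ℝ) :=
  titsReflection (titsForm_simpleRoot_self (M := M) i)

theorem simpleReflection_apply (i : B) (x : B →₀ ℝ) :
    simpleReflection M i x = x - (2 * titsForm M (simpleRoot i) x) • simpleRoot i :=
  titsReflection_apply _ _

theorem simpleReflection_apply_of_ne {i j : B} (hij : i ≠ j) (x : B →₀ ℝ) :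
    simpleReflection M j x i = x i := by
  simp [simpleReflection_apply, hij]

theorem neg_one_lt_titsForm_of_isOfFinOrder {i : B} {x : B →₀ ℝ} (hx : 0 ≤ x)
    (hxx : titsForm M x x = 1) (h : IsOfFinOrder (simpleReflection M i * titsReflection hxx)) :
    -1 < titsForm M (simpleRoot i) x := by
  by_contra! hle
  have hspan : x ∈ Submodule.span ℝ {simpleRoot i} := by
    refine mem_span_singleton_of_isOfFinOrder_reflection_mul_reflection
      (two_smul_titsForm_apply_self (titsForm_simpleRoot_self i))
      (two_smul_titsForm_apply_self hxx) ?_ ?_ h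
    · rw [LinearMap.smul_apply, smul_eq_mul]
      linarith
    · rw [LinearMap.smul_apply, smul_eq_mul, titsForm_comm]
      linarith
  obtain ⟨c, rfl⟩ := Submodule.mem_span_singleton.1 hspan
  have hroot : c • simpleRoot i = simpleRoot i :=
    eq_simpleRoot_of_forall_ne hx hxx fun k hk => by simp [Finsupp.single_eq_of_ne hk]
  rw [hroot, titsForm_simpleRoot_self] at hle
  linarith

theorem simpleReflection_isLiftable : M.IsLiftable (simpleReflection M) := by
  intro i j
  rcases eq_or_ne i j with rfl | hij
  · rw [M.diagonal, pow_one]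
    exact titsReflection_mul_self _
  have hone : M i j ≠ 1 := M.off_diagonal i j hij
  obtain hM | hM | hM : M i j = 0 ∨ M i j = 2 ∨ 3 ≤ M i j := by omega
  · rw [hM, pow_zero]
  · ext1 x
    simp only [hM, pow_two, LinearEquiv.mul_apply, LinearEquiv.coe_one, id_eq,
      simpleReflection_apply, map_sub, map_smul, titsForm_simpleRoot_simpleRoot, titsEntry_self,
      titsEntry_of_eq_two hM, titsEntry_symm j i]
    module
  · exact titsReflection_mul_titsReflection_pow_eq_one _ _ hM (titsForm_simpleRoot_simpleRoot i j)

/-- The geometric representation of a Coxeter group. -/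
def geomRep (cs : CoxeterSystem M W) : W →* ((B →₀ ℝ) ≃ₗ[ℝ] (B →₀ ℝ)) :=
  cs.lift ⟨simpleReflection M, simpleReflection_isLiftable⟩

variable (cs : CoxeterSystem M W)

theorem geomRep_simple (i : B) : geomRep cs (cs.simple i) = simpleReflection M i :=
  cs.lift_apply_simple simpleReflection_isLiftable i

theorem geomRep_mul_apply (v w : W) (x : B →₀ ℝ) :
    geomRep cs (v * w) x = geomRep cs v (geomRep cs w x) := by
  rw [map_mul, LinearEquiv.mul_apply]

theorem titsForm_geomRep (w : W) (x y : B →₀ ℝ) :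
    titsForm M (geomRep cs w x) (geomRep cs w y) = titsForm M x y := by
  induction w using cs.simple_induction_left with
  | one => simp
  | mul_simple_left w i ih =>
    rw [geomRep_mul_apply, geomRep_mul_apply, geomRep_simple, simpleReflection,
      titsForm_titsReflection, ih]

theorem titsForm_geomRep_simpleRoot_self (w : W) (i : B) :
    titsForm M (geomRep cs w (simpleRoot i)) (geomRep cs w (simpleRoot i)) = 1 := by
  rw [titsForm_geomRep, titsForm_simpleRoot_self]

theorem geomRep_conj_simple (w : W) (i : B) :
    geomRep cs (w * cs.simple i * w⁻¹) =
      titsReflection (titsForm_geomRep_simpleRoot_self cs w i) := by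
  ext1 x
  have hw : geomRep cs w (geomRep cs w⁻¹ x) = x := by
    rw [← geomRep_mul_apply, mul_inv_cancel, map_one, LinearEquiv.coe_one, id_eq]
  rw [geomRep_mul_apply, geomRep_mul_apply, geomRep_simple, simpleReflection_apply, map_sub,
    map_smul, hw, ← titsForm_geomRep cs w, hw, titsReflection_apply]

theorem simpleReflection_smul_simpleRoot_add_smul_simpleRoot (i j : B) (a b : ℝ) :
    simpleReflection M i (a • simpleRoot j + b • simpleRoot i) =
      (2 * cos (π / M i j) * a - b) • simpleRoot i + a • simpleRoot j := by
  have hij : titsForm M (simpleRoot i) (simpleRoot j) = -cos (π / M i j) :=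
    titsForm_simpleRoot_simpleRoot i j
  simp only [simpleReflection_apply, map_add, map_smul, titsForm_simpleRoot_self, hij]
  module

theorem geomRep_wordProd_alternatingWord_simpleRoot (i j : B) (k : ℕ) :
    geomRep cs (cs.wordProd (alternatingWord i j k)) (simpleRoot i) =
      (U ℝ k).eval (cos (π / M i j)) • simpleRoot (if Even k then i else j) +
        (U ℝ (k - 1)).eval (cos (π / M i j)) • simpleRoot (if Even k then j else i) := by
  induction k with
  | zero => simp [alternatingWord]
  | succ k ih =>
    have hU : (U ℝ (k + 1 : ℕ)).eval (cos (π / M i j)) = 2 * cos (π / M i j) *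
        (U ℝ k).eval (cos (π / M i j)) - (U ℝ (k - 1)).eval (cos (π / M i j)) := by
      rw [Nat.cast_succ, U_add_one]
      simp
    have hk : ((k + 1 : ℕ) - 1 : ℤ) = k := by simp
    rw [alternatingWord_succ', cs.wordProd_cons, geomRep_mul_apply, ih, geomRep_simple, hU, hk]
    by_cases heven : Even k
    · simp only [heven, Nat.even_add_one, not_true_eq_false, if_true, if_false]
      rw [simpleReflection_smul_simpleRoot_add_smul_simpleRoot, M.symmetric j i]
    · simp only [heven, Nat.even_add_one, not_false_eq_true, if_true, if_false]
      rw [simpleReflection_smul_simpleRoot_add_smul_simpleRoot]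

theorem exists_eq_mul_wordProd_alternatingWord {w : W} {i : B} (hi : ¬cs.IsRightDescent w i)
    (j : B) : ∃ (v : W) (k : ℕ), w = v * cs.wordProd (alternatingWord i j k) ∧
      cs.length w = cs.length v + k ∧ ¬cs.IsRightDescent v i ∧ ¬cs.IsRightDescent v j := by
  induction hn : cs.length w using Nat.strong_induction_on generalizing w i j with
  | _ n ih =>
    subst hn
    by_cases hj : cs.IsRightDescent w j
    · obtain ⟨v, k, hv, hlen, hvj, hvi⟩ :=
        ih _ hj ((cs.isRightDescent_iff_not_isRightDescent_mul).1 hj) i rfl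
      refine ⟨v, k + 1, ?_, ?_, hvi, hvj⟩
      · rw [alternatingWord_succ, cs.wordProd_concat, ← mul_assoc, ← hv,
          cs.simple_mul_simple_cancel_right]
      · rw [← cs.isRightDescent_iff.1 hj, hlen, add_assoc]
    · exact ⟨w, 0, by simp [alternatingWord], rfl, hi, hj⟩

theorem eq_zero_or_le_of_length_mul_alternatingWord {v : W} {i j : B} {k : ℕ}
    (h : cs.length (v * cs.wordProd (alternatingWord i j k)) = cs.length v + k) :
    M i j = 0 ∨ k ≤ M i j := by
  by_contra! hM
  refine cs.not_isReduced_alternatingWord i j hM.1 hM.2 ?_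
  have hle := cs.length_mul_le v (cs.wordProd (alternatingWord i j k))
  have hword := cs.length_wordProd_le (alternatingWord i j k)
  have hlen := length_alternatingWord i j k
  rw [CoxeterSystem.IsReduced]
  omega

/- A shortest representative `v` of the coset of `w` modulo `⟨s_i, s_j⟩` sends `α_i` and `α_j` to
nonnegative vectors by induction, so only the action of `⟨s_i, s_j⟩` on the plane of `α_i` and `α_j`
has to be controlled, and there the coefficients are Chebyshev polynomials. -/
theorem geomRep_simpleRoot_nonneg {w : W} {i : B} (hi : ¬cs.IsRightDescent w i) :
    0 ≤ geomRep cs w (simpleRoot i) := by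
  induction hn : cs.length w using Nat.strong_induction_on generalizing w i with
  | _ n ih =>
    subst hn
    rcases eq_or_ne w 1 with rfl | hw
    · simp
    obtain ⟨j, hj⟩ := cs.exists_rightDescent_of_ne_one hw
    obtain ⟨v, k, hv, hlen, hvi, hvj⟩ := exists_eq_mul_wordProd_alternatingWord cs hi j
    have hk : k ≠ 0 := by
      rintro rfl
      obtain rfl : w = v := by simpa [alternatingWord] using hv
      exact hvj hj
    have hvw : cs.length v < cs.length w := by omega
    have hM : M i j = 0 ∨ k + 1 ≤ M i j := by
      rw [M.symmetric]
      refine eq_zero_or_le_of_length_mul_alternatingWord cs (v := v) ?_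
      rw [alternatingWord_succ, cs.wordProd_concat, ← mul_assoc, ← hv,
        cs.not_isRightDescent_iff.1 hi, hlen, add_assoc]
    have hU : 0 ≤ (U ℝ k).eval (cos (π / M i j)) := chebyshevU_eval_cos_pi_div_nonneg hM
    have hU' : 0 ≤ (U ℝ (k - 1)).eval (cos (π / M i j)) := by
      obtain ⟨k, rfl⟩ := Nat.exists_eq_add_one_of_ne_zero hk
      rw [Nat.cast_add_one, add_sub_cancel_right]
      exact chebyshevU_eval_cos_pi_div_nonneg (hM.imp_right Nat.le_of_succ_le)
    have hpos (l : B) (hl : l = i ∨ l = j) : 0 ≤ geomRep cs v (simpleRoot l) := by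
      rcases hl with rfl | rfl
      exacts [ih _ hvw hvi rfl, ih _ hvw hvj rfl]
    rw [hv, geomRep_mul_apply, geomRep_wordProd_alternatingWord_simpleRoot, map_add, map_smul,
      map_smul]
    refine add_nonneg (smul_nonneg hU (hpos _ ?_)) (smul_nonneg hU' (hpos _ ?_)) <;>
      split_ifs <;> simp

theorem geomRep_simpleRoot_nonpos {w : W} {i : B} (hi : cs.IsRightDescent w i) :
    geomRep cs w (simpleRoot i) ≤ 0 := by
  have h := geomRep_simpleRoot_nonneg cs (cs.isRightDescent_iff_not_isRightDescent_mul.1 hi)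
  have hneg : simpleReflection M i (simpleRoot i) = -simpleRoot i := by
    rw [simpleReflection_apply, titsForm_simpleRoot_self]
    module
  rwa [geomRep_mul_apply, geomRep_simple, hneg, map_neg, neg_nonneg] at h

theorem geomRep_injective : Function.Injective (geomRep cs) := by
  refine (injective_iff_map_eq_one _).2 fun w hw => ?_
  by_contra hne
  obtain ⟨j, hj⟩ := cs.exists_rightDescent_of_ne_one hne
  have hneg := geomRep_simpleRoot_nonpos cs hj j
  rw [hw, LinearEquiv.coe_one, id_eq, Finsupp.single_eq_same] at hneg
  exact one_pos.not_ge hneg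

theorem eq_two_of_commute {i j : B} (hij : i ≠ j) (h : Commute (cs.simple i) (cs.simple j)) :
    M i j = 2 := by
  by_contra hM
  have hcoeff := congr($(congr(geomRep cs $(h.eq) (simpleRoot j))) i)
  simp only [geomRep_mul_apply, geomRep_simple, simpleReflection_apply, map_sub, map_smul,
    titsForm_simpleRoot_simpleRoot, titsEntry_self, titsEntry_symm j i, Finsupp.sub_apply,
    Finsupp.smul_apply, Finsupp.single_eq_same, Finsupp.single_eq_of_ne hij, smul_eq_mul] at hcoeff
  linarith [titsEntry_le_neg_half hij hM]

theorem geomRep_mem_supported {J : Set B} {w : W} (hw : w ∈ Subgroup.closure (cs.simple '' J))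
    {x : B →₀ ℝ} (hx : x ∈ Finsupp.supported ℝ ℝ J) : geomRep cs w x ∈ Finsupp.supported ℝ ℝ J := by
  have hsimple : ∀ i ∈ J, ∀ y ∈ Finsupp.supported ℝ ℝ J,
      geomRep cs (cs.simple i) y ∈ Finsupp.supported ℝ ℝ J := by
    intro i hi y hy
    rw [geomRep_simple, simpleReflection_apply]
    exact sub_mem hy (Submodule.smul_mem _ _ (Finsupp.single_mem_supported ℝ 1 hi))
  induction hw using Subgroup.closure_induction_left with
  | one => simpa using hx
  | mul_left g hg v _ ih =>
    obtain ⟨i, hi, rfl⟩ := hg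
    rw [geomRep_mul_apply]
    exact hsimple i hi _ ih
  | inv_mul_cancel g hg v _ ih =>
    obtain ⟨i, hi, rfl⟩ := hg
    rw [geomRep_mul_apply, cs.inv_simple]
    exact hsimple i hi _ ih

theorem titsForm_neg_of_length_conj {u : W} {i j : B}
    (hu : 0 ≤ geomRep cs u (simpleRoot i))
    (hlen : cs.length (cs.simple j * (u * cs.simple i * u⁻¹) * cs.simple j) =
      cs.length (u * cs.simple i * u⁻¹) + 2) :
    titsForm M (simpleRoot j) (geomRep cs u (simpleRoot i)) < 0 := by
  set β := geomRep cs u (simpleRoot i)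
  set t := u * cs.simple i * u⁻¹
  have htj : geomRep cs t (simpleRoot j) =
      simpleRoot j - (2 * titsForm M (simpleRoot j) β) • β := by
    rw [geomRep_conj_simple, titsReflection_apply, titsForm_comm]
  have hpos : 0 ≤ geomRep cs t (simpleRoot j) := by
    refine geomRep_simpleRoot_nonneg cs ?_
    have hle := cs.length_mul_le (cs.simple j) (t * cs.simple j)
    rw [← mul_assoc, hlen, cs.length_simple] at hle
    rw [CoxeterSystem.IsRightDescent]
    omega
  by_contra! hnonneg
  -- If the value is `0`, then `t` commutes with `s_j`. If it is positive, then `t α_j` can only be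
  -- positive for `β = α_j`, where `t α_j = -α_j`.
  rcases hnonneg.eq_or_lt with hzero | hb
  · have hcomm : t * cs.simple j * t⁻¹ = cs.simple j := by
      refine geomRep_injective cs (LinearEquiv.ext fun x => ?_)
      rw [geomRep_conj_simple, titsReflection_apply, htj, ← hzero, mul_zero, zero_smul, sub_zero,
        geomRep_simple, simpleReflection_apply]
    rw [mul_assoc, mul_inv_eq_iff_eq_mul.1 hcomm, cs.simple_mul_simple_cancel_left] at hlen
    omega
  · have hroot : β = simpleRoot j := by
      refine eq_simpleRoot_of_forall_ne hu (titsForm_geomRep_simpleRoot_self cs u i) fun k hk => ?_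
      have hβk : 0 ≤ β k := hu k
      have hk' : 0 ≤ geomRep cs t (simpleRoot j) k := hpos k
      rw [htj, Finsupp.sub_apply, Finsupp.smul_apply, Finsupp.single_eq_of_ne hk,
        smul_eq_mul] at hk'
      nlinarith
    have hj : 0 ≤ geomRep cs t (simpleRoot j) j := hpos j
    rw [htj, hroot, titsForm_simpleRoot_self, Finsupp.sub_apply, Finsupp.smul_apply,
      Finsupp.single_eq_same, smul_eq_mul] at hj
    linarith

theorem length_conj_simple_le (w : W) (i : B) :
    cs.length (w⁻¹ * cs.simple i * w) ≤ 2 * cs.length w + 1 := by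
  have h₁ := cs.length_mul_le (w⁻¹ * cs.simple i) w
  have h₂ := cs.length_mul_le w⁻¹ (cs.simple i)
  rw [cs.length_inv, cs.length_simple] at h₂
  omega

end GeometricRepresentation

namespace IsBase

variable {cs : CoxeterSystem M W} {s j : B} {v w : W}

theorem not_isRightDescent_inv (hw : IsBase cs s w) : ¬cs.IsRightDescent w⁻¹ s := by
  have hlen := hw.1
  have hle := cs.length_mul_le (w⁻¹ * cs.simple s) w
  rw [CoxeterSystem.IsRightDescent, cs.length_inv]
  omega

theorem geomRep_inv_nonneg (hw : IsBase cs s w) : 0 ≤ geomRep cs w⁻¹ (simpleRoot s) :=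
  geomRep_simpleRoot_nonneg cs hw.not_isRightDescent_inv

theorem length_simple_mul_conj_mul_simple (hw : IsBase cs s (v * cs.simple j))
    (hv : ¬cs.IsRightDescent v j) :
    cs.length (cs.simple j * (v⁻¹ * cs.simple s * v) * cs.simple j) = 2 * cs.length v + 3 := by
  have hlen := hw.1
  rw [cs.not_isRightDescent_iff.1 hv, mul_inv_rev, cs.inv_simple] at hlen
  simp only [mul_assoc] at hlen ⊢
  omega

theorem of_mul_simple (hw : IsBase cs s (v * cs.simple j)) (hv : ¬cs.IsRightDescent v j) :
    IsBase cs s v := by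
  have hlen := hw.length_simple_mul_conj_mul_simple hv
  refine ⟨?_, fun t ht htv => hw.2 t ht ?_⟩
  · have h₁ := cs.length_mul_le (cs.simple j * (v⁻¹ * cs.simple s * v)) (cs.simple j)
    have h₂ := cs.length_mul_le (cs.simple j) (v⁻¹ * cs.simple s * v)
    rw [cs.length_simple] at h₁ h₂
    have hle := length_conj_simple_le cs v s
    omega
  · have hle := cs.length_mul_le (t * v) (cs.simple j)
    rw [cs.not_isRightDescent_iff.1 hv, ← mul_assoc]
    rw [cs.length_simple] at hle
    omega

theorem titsForm_mem_Ioo (hw : IsBase cs s (v * cs.simple j)) (hv : ¬cs.IsRightDescent v j) :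
    titsForm M (simpleRoot j) (geomRep cs v⁻¹ (simpleRoot s)) ∈ Set.Ioo (-1) 0 := by
  have hvbase := hw.of_mul_simple hv
  constructor
  · have hfin : (Subgroup.closure {cs.simple s, v * cs.simple j * v⁻¹} : Set W).Finite := by
      refine hw.2 _ ⟨v, j, rfl⟩ ?_
      simp [mul_assoc, cs.not_isRightDescent_iff.1 hv]
    have hord := (geomRep cs).isOfFinOrder (isOfFinOrder_mul_of_finite_closure_pair hfin)
    rw [map_mul, geomRep_simple, geomRep_conj_simple] at hord
    have hlt := neg_one_lt_titsForm_of_isOfFinOrder (geomRep_simpleRoot_nonneg cs hv) _ hord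
    rwa [← titsForm_geomRep cs v⁻¹, ← geomRep_mul_apply, inv_mul_cancel, map_one,
      LinearEquiv.coe_one, id_eq, titsForm_comm] at hlt
  · refine titsForm_neg_of_length_conj cs hvbase.geomRep_inv_nonneg ?_
    rw [inv_inv, hw.length_simple_mul_conj_mul_simple hv, hvbase.1]

end IsBase

section CoxeterGraph

/-- The Coxeter graph, which joins two distinct indices if the corresponding generators do not
commute. -/
def coxeterGraph (M : CoxeterMatrix B) : SimpleGraph B where
  Adj i j := i ≠ j ∧ M i j ≠ 2
  symm := ⟨fun i j h => ⟨h.1.symm, M.symmetric i j ▸ h.2⟩⟩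
  loopless := ⟨fun _ h => h.1 rfl⟩

theorem titsEntry_le_neg_half_of_adj {i j : B} (h : (coxeterGraph M).Adj i j) :
    titsEntry M i j ≤ -(1 / 2) :=
  titsEntry_le_neg_half h.1 h.2

theorem irreducibleSubset_of_preconnected_induce (cs : CoxeterSystem M W) {J : Set B}
    (hJ : ((coxeterGraph M).induce J).Preconnected) : IrreducibleSubset cs J := by
  rintro ⟨K, L, ⟨k, hk⟩, ⟨l, hl⟩, hKL, rfl, hcomm⟩
  obtain ⟨p⟩ := hJ ⟨k, .inl hk⟩ ⟨l, .inr hl⟩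
  obtain ⟨d, -, hfst, hsnd⟩ :=
    p.exists_boundary_dart (Subtype.val ⁻¹' K) hk (hKL.notMem_of_mem_right hl)
  have hadj : (coxeterGraph M).Adj d.fst d.snd := d.adj
  exact hadj.2 <| eq_two_of_commute cs hadj.1 <| hcomm _ hfst _ <| d.snd.2.resolve_left hsnd

theorem fromRel_orderOf_le_induce_coxeterGraph (cs : CoxeterSystem M W) (J : Set B) :
    (SimpleGraph.fromRel fun j j' : J => 3 ≤ orderOf (cs.simple j * cs.simple j')) ≤
      (coxeterGraph M).induce J := by
  rintro i j ⟨hij, h⟩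
  refine ⟨Subtype.coe_ne_coe.2 hij, fun hM => ?_⟩
  have hord : orderOf (cs.simple i * cs.simple j) ≤ 2 :=
    orderOf_le_of_pow_eq_one two_pos (hM ▸ cs.simple_mul_simple_pow i j)
  have hord' : orderOf (cs.simple j * cs.simple i) ≤ 2 :=
    orderOf_le_of_pow_eq_one two_pos (hM ▸ cs.simple_mul_simple_pow' i j)
  omega

end CoxeterGraph

section TreeVectors

variable {x : B →₀ ℝ} {j : B}

theorem titsForm_simpleRoot_le_sum_titsEntry (hx : ∀ i ∈ x.support, 1 ≤ x i)
    (hj : j ∉ x.support) {T : Finset B} (hT : T ⊆ x.support) :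
    titsForm M (simpleRoot j) x ≤ ∑ i ∈ T, titsEntry M j i := by
  have hneg : ∀ i ∈ x.support, titsEntry M j i ≤ 0 := fun i hi =>
    titsEntry_nonpos (ne_of_mem_of_not_mem hi hj).symm
  calc titsForm M (simpleRoot j) x
      = ∑ i ∈ x.support, x i * titsEntry M j i := titsForm_simpleRoot j x
    _ ≤ ∑ i ∈ x.support, titsEntry M j i := Finset.sum_le_sum fun i hi => by
        nlinarith [hx i hi, hneg i hi]
    _ ≤ ∑ i ∈ T, titsEntry M j i :=
        Finset.sum_le_sum_of_subset_of_nonpos' hT fun i hi _ => hneg i hi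

theorem titsForm_simpleRoot_le_titsEntry (hx : ∀ i ∈ x.support, 1 ≤ x i) (hj : j ∉ x.support)
    {i : B} (hi : i ∈ x.support) : titsForm M (simpleRoot j) x ≤ titsEntry M j i := by
  simpa using titsForm_simpleRoot_le_sum_titsEntry hx hj (Finset.singleton_subset_iff.2 hi)

theorem exists_adj_of_titsForm_neg (hj : j ∉ x.support)
    (hneg : titsForm M (simpleRoot j) x < 0) : ∃ i ∈ x.support, (coxeterGraph M).Adj j i := by
  rw [titsForm_simpleRoot] at hneg
  obtain ⟨i, hi, hne⟩ := Finset.exists_ne_zero_of_sum_ne_zero hneg.ne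
  exact ⟨i, hi, (ne_of_mem_of_not_mem hi hj).symm, fun h => hne (by simp [titsEntry_of_eq_two h])⟩

theorem eq_of_adj_of_neg_one_lt_titsForm (hx : ∀ i ∈ x.support, 1 ≤ x i) (hj : j ∉ x.support)
    (hlt : -1 < titsForm M (simpleRoot j) x) {i k : B} (hi : i ∈ x.support) (hk : k ∈ x.support)
    (hji : (coxeterGraph M).Adj j i) (hjk : (coxeterGraph M).Adj j k) : i = k := by
  classical
  by_contra hik
  have hle := titsForm_simpleRoot_le_sum_titsEntry (M := M) hx hj (Finset.insert_subset hi
    (Finset.singleton_subset_iff.2 hk))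
  rw [Finset.sum_pair hik] at hle
  linarith [titsEntry_le_neg_half_of_adj hji, titsEntry_le_neg_half_of_adj hjk]

theorem ne_zero_of_neg_one_lt_titsForm (hx : ∀ i ∈ x.support, 1 ≤ x i) (hj : j ∉ x.support)
    (hlt : -1 < titsForm M (simpleRoot j) x) {i : B} (hi : i ∈ x.support) : M j i ≠ 0 := by
  intro hM
  have hle := titsForm_simpleRoot_le_titsEntry (M := M) hx hj hi
  rw [titsEntry_of_eq_zero hM] at hle
  exact hle.not_gt hlt

/-- A vector whose nonzero coordinates are at least `1` and whose support is a subtree of the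
Coxeter graph without edges labelled `∞`. This is the property of the root `w⁻¹ α_s` of a base
`(s, w)` that survives each step of the induction on `w`. -/
structure IsTreeVector (M : CoxeterMatrix B) (x : B →₀ ℝ) : Prop where
  one_le : ∀ i ∈ x.support, 1 ≤ x i
  ne_zero : ∀ i ∈ x.support, ∀ k ∈ x.support, M i k ≠ 0
  isTree : ((coxeterGraph M).induce (x.support : Set B)).IsTree

theorem isTreeVector_simpleRoot (i : B) : IsTreeVector M (simpleRoot i) := by
  have hsupp : (simpleRoot i).support = {i} := Finsupp.support_single i one_ne_zero
  refine ⟨?_, ?_, ?_⟩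
  · simp
  · simp
  · rw [hsupp, Finset.coe_singleton]
    exact .of_subsingleton

theorem IsTreeVector.one_le_simpleReflection (hx : IsTreeVector M x)
    (hneg : titsForm M (simpleRoot j) x < 0) : 1 ≤ simpleReflection M j x j := by
  rw [simpleReflection_apply, Finsupp.sub_apply, Finsupp.smul_apply, Finsupp.single_eq_same,
    smul_eq_mul]
  by_cases hj : j ∈ x.support
  · linarith [hx.one_le j hj]
  · obtain ⟨i, hi, hji⟩ := exists_adj_of_titsForm_neg hj hneg
    have hle := titsForm_simpleRoot_le_titsEntry (M := M) hx.one_le hj hi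
    linarith [Finsupp.notMem_support_iff.1 hj, titsEntry_le_neg_half_of_adj hji]

theorem IsTreeVector.coe_support_simpleReflection (hx : IsTreeVector M x)
    (hneg : titsForm M (simpleRoot j) x < 0) :
    ((simpleReflection M j x).support : Set B) = insert j (x.support : Set B) := by
  ext i
  rcases eq_or_ne i j with rfl | hij
  · simpa using (one_pos.trans_le (hx.one_le_simpleReflection hneg)).ne'
  · simp [hij, simpleReflection_apply_of_ne hij]

theorem IsTreeVector.simpleReflection_of_mem_Ioo (hx : IsTreeVector M x)
    (hIoo : titsForm M (simpleRoot j) x ∈ Set.Ioo (-1) 0) :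
    IsTreeVector M (simpleReflection M j x) := by
  have hsupp := hx.coe_support_simpleReflection hIoo.2
  have hmem : ∀ i ∈ (simpleReflection M j x).support, i ≠ j → i ∈ x.support := fun i hi hij =>
    Set.mem_of_mem_insert_of_ne (hsupp ▸ Finset.mem_coe.2 hi) hij
  have hjM : ∀ i ∈ x.support, M j i ≠ 0 := by
    by_cases hj : j ∈ x.support
    · exact hx.ne_zero j hj
    · exact fun i hi => ne_zero_of_neg_one_lt_titsForm hx.one_le hj hIoo.1 hi
  refine ⟨fun i hi => ?_, fun i hi k hk => ?_, ?_⟩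
  · rcases eq_or_ne i j with rfl | hij
    · exact hx.one_le_simpleReflection hIoo.2
    · rw [simpleReflection_apply_of_ne hij]
      exact hx.one_le i (hmem i hi hij)
  · rcases eq_or_ne i j with rfl | hij <;> rcases eq_or_ne k i with rfl | hki
    · simp
    · exact hjM k (hmem k hk hki)
    · simp
    · rcases eq_or_ne k j with rfl | hkj
      · exact M.symmetric i k ▸ hjM i (hmem i hi hij)
      · exact hx.ne_zero i (hmem i hi hij) k (hmem k hk hkj)
  · rw [hsupp]
    by_cases hj : j ∈ x.support
    · rw [Set.insert_eq_of_mem (Finset.mem_coe.2 hj)]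
      exact hx.isTree
    · obtain ⟨i, hi, hji⟩ := exists_adj_of_titsForm_neg hj hIoo.2
      exact isTree_induce_insert hx.isTree hi hji fun k hk hjk =>
        eq_of_adj_of_neg_one_lt_titsForm hx.one_le hj hIoo.1 hk hi hjk hji

end TreeVectors

section Support

variable {cs : CoxeterSystem M W} {s : B} {w : W}

theorem IsBase.isTreeVector_and_mem (hw : IsBase cs s w) :
    IsTreeVector M (geomRep cs w⁻¹ (simpleRoot s)) ∧
      s ∈ (geomRep cs w⁻¹ (simpleRoot s)).support ∧
      w ∈ Subgroup.closure (cs.simple '' (geomRep cs w⁻¹ (simpleRoot s)).support) := by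
  induction hn : cs.length w using Nat.strong_induction_on generalizing w with
  | _ n ih =>
    subst hn
    rcases eq_or_ne w 1 with rfl | hne
    · simpa using isTreeVector_simpleRoot s
    obtain ⟨j, hj⟩ := cs.exists_rightDescent_of_ne_one hne
    obtain ⟨v, rfl⟩ : ∃ v, w = v * cs.simple j := ⟨w * cs.simple j, by simp⟩
    have hv : ¬cs.IsRightDescent v j := by
      simpa using cs.isRightDescent_iff_not_isRightDescent_mul.1 hj
    obtain ⟨htree, hs, hmem⟩ := ih (cs.length v)
      (by rw [cs.not_isRightDescent_iff.1 hv]; exact Nat.lt_succ_self _) (hw.of_mul_simple hv) rfl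
    have hIoo := hw.titsForm_mem_Ioo hv
    have hroot : geomRep cs (v * cs.simple j)⁻¹ (simpleRoot s) =
        simpleReflection M j (geomRep cs v⁻¹ (simpleRoot s)) := by
      rw [mul_inv_rev, cs.inv_simple, geomRep_mul_apply, geomRep_simple]
    have hsupp := htree.coe_support_simpleReflection hIoo.2
    rw [hroot]
    refine ⟨htree.simpleReflection_of_mem_Ioo hIoo, ?_, ?_⟩
    · rw [← Finset.mem_coe, hsupp]
      exact Set.mem_insert_of_mem j hs
    · rw [hsupp]
      refine mul_mem (Subgroup.closure_mono (Set.image_mono (Set.subset_insert _ _)) hmem) ?_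
      exact Subgroup.subset_closure (Set.mem_image_of_mem _ (Set.mem_insert _ _))

theorem IsSupport.eq_coe_support {J : Set B} (hJ : IsSupport cs s w J) (hw : IsBase cs s w) :
    J = (geomRep cs w⁻¹ (simpleRoot s)).support := by
  obtain ⟨hsJ, hwJ, hmin⟩ := hJ
  obtain ⟨-, hs, hmem⟩ := hw.isTreeVector_and_mem
  refine (hmin _ hs hmem).antisymm ?_
  exact (Finsupp.mem_supported ℝ _).1 <|
    geomRep_mem_supported cs (inv_mem hwJ) (Finsupp.single_mem_supported ℝ 1 hsJ)

theorem support_irreducible_tree_two_spherical_general (cs : CoxeterSystem M W) (s : B) (w : W)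
    (hbase : IsBase cs s w) (J : Set B) (hJ : IsSupport cs s w J) :
    IrreducibleSubset cs J ∧ TwoSpherical cs J ∧
      (SimpleGraph.fromRel fun j j' : J =>
        3 ≤ orderOf (cs.simple j * cs.simple j')).IsAcyclic := by
  obtain ⟨htree, -⟩ := hbase.isTreeVector_and_mem
  obtain rfl := hJ.eq_coe_support hbase
  exact ⟨irreducibleSubset_of_preconnected_induce cs htree.isTree.connected.preconnected,
    fun i hi j hj => adjacent_of_ne_zero cs (htree.ne_zero i hi j hj),
    htree.isTree.isAcyclic.anti (fromRel_orderOf_le_induce_coxeterGraph cs _)⟩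

end Support

end

/-- The support of a base is irreducible and tree-2-spherical: every pair of
its elements generates a finite subgroup, and the graph on it whose edges are the pairs whose
product has order at least 3 is a forest. -/
theorem support_irreducible_tree_two_spherical
    [Finite B] (cs : CoxeterSystem M W) (s : B) (w : W)
    (hbase : IsBase cs s w) (J : Set B) (hJ : IsSupport cs s w J) :
    IrreducibleSubset cs J ∧ TwoSpherical cs J ∧
      (SimpleGraph.fromRel fun j j' : J =>
        3 ≤ orderOf (cs.simple j * cs.simple j')).IsAcyclic :=
  support_irreducible_tree_two_spherical_general cs s w hbase J hJ
end

section
/- Let (W,S) be a Coxeter system with S finite, let J ⊆ S be an irreducible subset generating a finite subgroup, and let s ∈ J. Then there exists a simple base with core s and support J. -/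
variable {B : Type*} {W : Type*} [Group W] {M : CoxeterMatrix B}

/-!
Write `β = w⁻¹ α_s` for the image of the simple root of `s` in the geometric representation. Start
from `w = 1` and append, one at a time, letters `j ∈ J` not yet used that fail to commute with `s`
or with an earlier letter; irreducibility of `J` provides such a `j` until `J` is exhausted. The
coefficients of `β` are positive exactly on the letters used so far, so `⟨β, α_j⟩ < 0`. Hence `s_j`
does not commute with the reflection `t = w⁻¹ s w` along `β`, and as `t` lies in a parabolic
subgroup not containing `s_j`, the strong exchange condition gives `ℓ(s_j t s_j) = ℓ(t) + 2`. Strong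
exchange also puts every left inversion of `w` into the finite group `W_J`.
-/

namespace SimpleBase

open Module Polynomial.Chebyshev

variable (cs : CoxeterSystem M W)

/-! ### The strong exchange condition -/

section StrongExchange

theorem inv_pow_mul_simple_mul_pow (i j : B) (n : ℕ) :
    ((cs.simple i * cs.simple j) ^ n)⁻¹ * cs.simple j * (cs.simple i * cs.simple j) ^ n =
      cs.simple j * (cs.simple i * cs.simple j) ^ (2 * n) := by
  have inverted : SemiconjBy (cs.simple j) (cs.simple i * cs.simple j)
      (cs.simple i * cs.simple j)⁻¹ := by
    simp [SemiconjBy, mul_assoc]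
  rw [two_mul, pow_add, ← mul_assoc, (inverted.pow_right n).eq, inv_pow]

theorem rightInvSeq_flatten_replicate (i j : B) (n : ℕ) :
    cs.rightInvSeq (List.replicate n [i, j]).flatten =
      ((List.range (2 * n)).map
        fun k ↦ cs.simple j * (cs.simple i * cs.simple j) ^ k).reverse := by
  induction n with
  | zero => simp
  | succ n ih =>
    set c := cs.simple i * cs.simple j with hc
    have prod_eq : cs.wordProd (List.replicate n [i, j]).flatten = c ^ n := by
      simp [CoxeterSystem.wordProd, hc]
    have conj_j : (c ^ n)⁻¹ * cs.simple j * c ^ n = cs.simple j * c ^ (2 * n) :=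
      inv_pow_mul_simple_mul_pow cs i j n
    have conj_i : (cs.simple j * c ^ n)⁻¹ * cs.simple i * (cs.simple j * c ^ n) =
        cs.simple j * c ^ (2 * n + 1) := by
      calc
        _ = (c ^ n)⁻¹ * cs.simple j * (c * c ^ n) := by simp [hc, mul_assoc]
        _ = (c ^ n)⁻¹ * cs.simple j * c ^ n * c := by rw [← pow_succ', pow_succ]; group
        _ = cs.simple j * c ^ (2 * n + 1) := by rw [conj_j, pow_succ, mul_assoc]
    rw [List.replicate_succ, List.flatten_cons, Nat.mul_succ, List.range_succ, List.range_succ]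
    simp only [List.cons_append, List.nil_append, CoxeterSystem.rightInvSeq,
      CoxeterSystem.wordProd_cons, prod_eq, conj_i, conj_j, ih, List.map_append, List.map_cons,
      List.map_nil, List.reverse_append, List.reverse_cons, List.reverse_nil]

open Classical in
theorem even_count_rightInvSeq_flatten_replicate (i j : B) (r : W) :
    Even ((cs.rightInvSeq (List.replicate (M i j) [i, j]).flatten).count r) := by
  rw [rightInvSeq_flatten_replicate, List.count_reverse, two_mul, List.range_add, List.map_append,
    List.map_map, List.count_append]
  simp [Function.comp_def, pow_add]

open Classical in
/-- The action of the simple reflection `sᵢ` on reflections with a sign, `(r, ε) ↦ (sᵢ r sᵢ, ±ε)`,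
the sign changing exactly when `r = sᵢ`; the idea is due to Tits. Signs are written additively in
`ZMod 2`, and `r` ranges over the whole group. -/
noncomputable def signedConj (i : B) : Equiv.Perm (W × ZMod 2) :=
  Function.Involutive.toPerm
    (fun p ↦ (cs.simple i * p.1 * cs.simple i, p.2 + if p.1 = cs.simple i then 1 else 0)) <| by
    rintro ⟨r, ε⟩
    have fixed : cs.simple i * r * cs.simple i = cs.simple i ↔ r = cs.simple i := by
      rw [mul_eq_right, mul_eq_one_iff_inv_eq, cs.inv_simple, eq_comm]
    ext
    · simp [mul_assoc]
    · simp [fixed, add_assoc, CharTwo.add_self_eq_zero]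

open Classical in
theorem signedConj_apply (i : B) (r : W) (ε : ZMod 2) :
    signedConj cs i (r, ε) =
      (cs.simple i * r * cs.simple i, ε + if r = cs.simple i then 1 else 0) :=
  rfl

open Classical in
theorem prod_map_signedConj_apply (ω : List B) (r : W) (ε : ZMod 2) :
    (ω.map (signedConj cs)).prod (r, ε) =
      (cs.wordProd ω * r * (cs.wordProd ω)⁻¹, ε + (cs.rightInvSeq ω).count r) := by
  induction ω with
  | nil => simp
  | cons i ω ih =>
    have conj_eq_iff : cs.wordProd ω * r * (cs.wordProd ω)⁻¹ = cs.simple i ↔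
        (cs.wordProd ω)⁻¹ * cs.simple i * cs.wordProd ω = r := by
      rw [mul_inv_eq_iff_eq_mul, mul_assoc, inv_mul_eq_iff_eq_mul, eq_comm]
    rw [List.map_cons, List.prod_cons, Equiv.Perm.mul_apply, ih]
    ext
    · simp [signedConj_apply, cs.wordProd_cons, mul_assoc]
    · simp [signedConj_apply, conj_eq_iff, CoxeterSystem.rightInvSeq, List.count_cons, add_assoc]

theorem isLiftable_signedConj : M.IsLiftable (signedConj cs) := by
  classical
  intro i j
  ext1 ⟨r, ε⟩
  have action := prod_map_signedConj_apply cs (List.replicate (M i j) [i, j]).flatten r ε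
  have count_eq_zero := (ZMod.natCast_eq_zero_iff_even).2
    (even_count_rightInvSeq_flatten_replicate cs i j r)
  rw [count_eq_zero] at action
  simpa [CoxeterSystem.wordProd] using action

/-- The parity with which `r` occurs in the right inversion sequence of a word representing `w`;
see `inversionParity_wordProd`. -/
noncomputable def inversionParity (w r : W) : ZMod 2 :=
  (cs.lift ⟨signedConj cs, isLiftable_signedConj cs⟩ w (r, 0)).2

open Classical in
theorem lift_signedConj_wordProd (ω : List B) (r : W) (ε : ZMod 2) :
    cs.lift ⟨signedConj cs, isLiftable_signedConj cs⟩ (cs.wordProd ω) (r, ε) =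
      (cs.wordProd ω * r * (cs.wordProd ω)⁻¹, ε + (cs.rightInvSeq ω).count r) := by
  rw [← prod_map_signedConj_apply, CoxeterSystem.wordProd, map_list_prod, List.map_map]
  simp only [Function.comp_def, cs.lift_apply_simple]

open Classical in
theorem inversionParity_wordProd (ω : List B) (r : W) :
    inversionParity cs (cs.wordProd ω) r = (cs.rightInvSeq ω).count r := by
  rw [inversionParity, lift_signedConj_wordProd, zero_add]

theorem inversionParity_mul (x y r : W) :
    inversionParity cs (x * y) r =
      inversionParity cs y r + inversionParity cs x (y * r * y⁻¹) := by
  classical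
  obtain ⟨ω, rfl⟩ := cs.wordProd_surjective x
  obtain ⟨ω', rfl⟩ := cs.wordProd_surjective y
  rw [inversionParity, map_mul, Equiv.Perm.mul_apply, lift_signedConj_wordProd,
    lift_signedConj_wordProd, inversionParity_wordProd, inversionParity_wordProd, zero_add]

theorem inversionParity_self {t : W} (ht : cs.IsReflection t) : inversionParity cs t t = 1 := by
  obtain ⟨u, i, rfl⟩ := ht
  set t := u * cs.simple i * u⁻¹ with ht
  have one : inversionParity cs 1 t = 0 := by
    simpa using inversionParity_wordProd cs [] t
  have simple : inversionParity cs (cs.simple i) (cs.simple i) = 1 := by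
    simpa using inversionParity_wordProd cs [i] (cs.simple i)
  have conj_t : u⁻¹ * t * u⁻¹⁻¹ = cs.simple i := by simp [ht, mul_assoc]
  have cancel : inversionParity cs u⁻¹ t + inversionParity cs u (cs.simple i) = 0 := by
    rw [← conj_t, ← inversionParity_mul, mul_inv_cancel, one]
  calc
    inversionParity cs t t
      = inversionParity cs u⁻¹ t + (inversionParity cs (cs.simple i) (cs.simple i) +
          inversionParity cs u (cs.simple i)) := by
        conv_lhs => rw [ht]
        rw [inversionParity_mul, conj_t, inversionParity_mul, mul_inv_cancel_right]
    _ = 1 := by rw [add_left_comm, cancel, simple, add_zero]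

theorem mem_rightInvSeq_of_inversionParity_ne_zero {ω : List B} {t : W}
    (h : inversionParity cs (cs.wordProd ω) t ≠ 0) : t ∈ cs.rightInvSeq ω := by
  classical
  contrapose! h
  rw [inversionParity_wordProd, List.count_eq_zero_of_not_mem h, Nat.cast_zero]

theorem mem_rightInvSeq_of_isRightInversion {ω : List B} {t : W}
    (h : cs.IsRightInversion (cs.wordProd ω) t) : t ∈ cs.rightInvSeq ω := by
  refine mem_rightInvSeq_of_inversionParity_ne_zero cs fun even ↦ ?_
  obtain ⟨ω', reduced, prod_eq⟩ := cs.exists_isReduced (cs.wordProd ω * t)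
  have odd : inversionParity cs (cs.wordProd ω') t ≠ 0 := by
    rw [← prod_eq, inversionParity_mul, inversionParity_self cs h.1, mul_inv_cancel_right, even]
    simp
  have inversion := cs.isRightInversion_of_mem_rightInvSeq reduced
    (mem_rightInvSeq_of_inversionParity_ne_zero cs odd)
  rw [← prod_eq] at inversion
  exact h.1.isRightInversion_mul_left_iff.1 inversion h

end StrongExchange

/-! ### Standard parabolic subgroups -/

section Parabolic

/-- The standard parabolic subgroup `W_K`. -/
abbrev parabolic (K : Set B) : Subgroup W := Subgroup.closure (cs.simple '' K)

variable {K : Set B}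

theorem simple_mem_parabolic {i : B} (hi : i ∈ K) : cs.simple i ∈ parabolic cs K :=
  Subgroup.subset_closure (Set.mem_image_of_mem _ hi)

theorem wordProd_mem_parabolic {ω : List B} (hω : ∀ i ∈ ω, i ∈ K) :
    cs.wordProd ω ∈ parabolic cs K := by
  refine Subgroup.list_prod_mem _ fun x hx ↦ ?_
  obtain ⟨i, hi, rfl⟩ := List.mem_map.1 hx
  exact simple_mem_parabolic cs (hω i hi)

theorem exists_wordProd_eq_of_mem_parabolic {x : W} (hx : x ∈ parabolic cs K) :
    ∃ ω : List B, (∀ i ∈ ω, i ∈ K) ∧ cs.wordProd ω = x := by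
  induction hx using Subgroup.closure_induction with
  | mem x hx =>
    obtain ⟨i, hi, rfl⟩ := hx
    exact ⟨[i], by simpa using hi, cs.wordProd_singleton i⟩
  | one => exact ⟨[], by simp, cs.wordProd_nil⟩
  | mul x y _ _ ihx ihy =>
    obtain ⟨ω, hω, rfl⟩ := ihx
    obtain ⟨ω', hω', rfl⟩ := ihy
    exact ⟨ω ++ ω', by simpa [or_imp, forall_and] using ⟨hω, hω'⟩, cs.wordProd_append ω ω'⟩
  | inv x _ ihx =>
    obtain ⟨ω, hω, rfl⟩ := ihx
    exact ⟨ω.reverse, by simpa using hω, cs.wordProd_reverse ω⟩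

theorem mem_parabolic_of_mem_rightInvSeq {ω : List B} (hω : ∀ i ∈ ω, i ∈ K) {t : W}
    (ht : t ∈ cs.rightInvSeq ω) : t ∈ parabolic cs K := by
  induction ω with
  | nil => simp at ht
  | cons i ω ih =>
    rw [List.forall_mem_cons] at hω
    obtain rfl | ht := List.mem_cons.1 ht
    · have prod_mem := wordProd_mem_parabolic cs hω.2
      exact mul_mem (mul_mem (inv_mem prod_mem) (simple_mem_parabolic cs hω.1)) prod_mem
    · exact ih hω.2 ht

theorem mem_parabolic_of_isRightInversion {x t : W} (hx : x ∈ parabolic cs K)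
    (ht : cs.IsRightInversion x t) : t ∈ parabolic cs K := by
  obtain ⟨ω, hω, rfl⟩ := exists_wordProd_eq_of_mem_parabolic cs hx
  exact mem_parabolic_of_mem_rightInvSeq cs hω (mem_rightInvSeq_of_isRightInversion cs ht)

theorem mem_parabolic_of_isLeftInversion {x t : W} (hx : x ∈ parabolic cs K)
    (ht : cs.IsLeftInversion x t) : t ∈ parabolic cs K :=
  mem_parabolic_of_isRightInversion cs (inv_mem hx) (cs.isRightInversion_inv_iff.2 ht)

theorem length_simple_mul_mul_simple {x : W} (hx : x ∈ parabolic cs K) {j : B}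
    (hj : cs.simple j ∉ parabolic cs K) (hcomm : ¬ Commute (cs.simple j) x) :
    cs.length (cs.simple j * x * cs.simple j) = cs.length x + 2 := by
  have left : ¬ cs.IsLeftDescent x j := fun descent ↦ hj <|
    mem_parabolic_of_isLeftInversion cs hx
      ((cs.isLeftInversion_simple_iff_isLeftDescent x j).2 descent)
  have right : ¬ cs.IsRightDescent (cs.simple j * x) j := by
    intro descent
    obtain ⟨ω, hω, rfl⟩ := exists_wordProd_eq_of_mem_parabolic cs hx
    rw [← cs.wordProd_cons, ← cs.isRightInversion_simple_iff_isRightDescent] at descent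
    obtain conj | mem := List.mem_cons.1 (mem_rightInvSeq_of_isRightInversion cs descent)
    · rw [mul_assoc, eq_inv_mul_iff_mul_eq] at conj
      exact hcomm conj.symm
    · exact hj (mem_parabolic_of_mem_rightInvSeq cs hω mem)
  rw [cs.not_isRightDescent_iff.1 right, cs.not_isLeftDescent_iff.1 left]

end Parabolic

/-! ### The geometric representation -/

section DihedralRelation

theorem S_eval_add_S_eval_eq_zero {θ : ℝ} (hθ : Real.sin θ ≠ 0) {k l : ℤ}
    (h : ((k + l + 2 : ℤ) : ℝ) * θ = 2 * Real.pi) :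
    (S ℝ k).eval (2 * Real.cos θ) + (S ℝ l).eval (2 * Real.cos θ) = 0 := by
  have angles : ((k : ℝ) + 1) * θ = 2 * Real.pi - (l + 1) * θ := by
    push_cast at h
    linarith
  refine (mul_eq_zero.1 ?_).resolve_right hθ
  rw [add_mul, S_two_mul_real_cos, S_two_mul_real_cos, angles, Real.sin_two_pi_sub, neg_add_cancel]

theorem reflection_mul_reflection_pow_eq_one {V : Type*} [AddCommGroup V] [Module ℝ V] {x y : V}
    {f g : Dual ℝ V} (hf : f x = 2) (hg : g y = 2) {m : ℕ} (hm : 3 ≤ m)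
    (hfg : f y * g x = 4 * Real.cos (Real.pi / m) ^ 2) :
    (reflection hf * reflection hg) ^ m = 1 := by
  have m_ge : (3 : ℝ) ≤ m := by exact_mod_cast hm
  set θ := 2 * (Real.pi / m) with hθ
  have m_mul_θ : (m : ℝ) * θ = 2 * Real.pi := by rw [hθ]; field_simp
  have sin_ne_zero : Real.sin θ ≠ 0 := by
    refine (Real.sin_pos_of_pos_of_lt_pi (by positivity) ?_).ne'
    nlinarith [Real.pi_pos]
  have trace_eq : 2 * Real.cos θ = f y * g x - 2 := by
    rw [hfg, hθ, Real.cos_two_mul]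
    ring
  have S_add_S {k l : ℤ} (hkl : k + l + 2 = m) :
      (S ℝ k).eval (2 * Real.cos θ) + (S ℝ l).eval (2 * Real.cos θ) = 0 :=
    S_eval_add_S_eval_eq_zero sin_ne_zero (by rw [hkl]; exact_mod_cast m_mul_θ)
  ext z
  rw [reflection_mul_reflection_pow_apply hf hg m z _ trace_eq]
  obtain ⟨k, rfl | rfl⟩ := m.even_or_odd'
  · have S_eq_zero {l : ℤ} (hl : l + l + 2 = (2 * k : ℕ)) :
        (S ℝ l).eval (2 * Real.cos θ) = 0 := by
      linarith [S_add_S hl]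
    rw [S_eq_zero (l := ((2 * k : ℕ) - 2) / 2) (by omega),
      S_eq_zero (l := ((2 * k : ℕ) - 1) / 2) (by omega)]
    simp
  · rw [S_add_S (by omega), S_add_S (by omega)]
    simp

end DihedralRelation

section GeometricRepresentation

/-- The entry `-2 cos (π / mᵢⱼ)` of the (generalized) Cartan matrix, which is twice the standard
bilinear form on simple roots. For `mᵢⱼ = ∞`, encoded as `M i j = 0`, division by zero gives the
correct value `-2`. -/
noncomputable def cartanEntry (M : CoxeterMatrix B) (i j : B) : ℝ :=
  -2 * Real.cos (Real.pi / M i j)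

theorem cartanEntry_self (i : B) : cartanEntry M i i = 2 := by
  simp [cartanEntry]

theorem cartanEntry_comm (i j : B) : cartanEntry M i j = cartanEntry M j i := by
  rw [cartanEntry, M.symmetric, cartanEntry]

theorem entry_eq_zero_or_eq_two_or_three_le (M : CoxeterMatrix B) {i j : B} (hij : i ≠ j) :
    M i j = 0 ∨ M i j = 2 ∨ 3 ≤ M i j := by
  have := M.off_diagonal i j hij
  omega

theorem cartanEntry_neg {i j : B} (hij : i ≠ j) (h : M i j ≠ 2) : cartanEntry M i j < 0 := by
  obtain infinite | two | three_le := entry_eq_zero_or_eq_two_or_three_le M hij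
  · simp [cartanEntry, infinite]
  · exact absurd two h
  · have three_le' : (3 : ℝ) ≤ M i j := by exact_mod_cast three_le
    have angle_pos : 0 < Real.pi / M i j := by positivity
    have angle_lt : Real.pi / M i j < Real.pi / 2 := by gcongr; linarith
    have := Real.cos_pos_of_mem_Ioo ⟨by linarith, angle_lt⟩
    rw [cartanEntry]
    linarith

theorem cartanEntry_nonpos {i j : B} (hij : i ≠ j) : cartanEntry M i j ≤ 0 := by
  by_cases h : M i j = 2
  · simp [cartanEntry, h]
  · exact (cartanEntry_neg hij h).le

/-- The simple coroot of `i`, as a linear form on the span `B →₀ ℝ` of the simple roots. -/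
noncomputable def coroot (M : CoxeterMatrix B) (i : B) : Dual ℝ (B →₀ ℝ) :=
  Finsupp.linearCombination ℝ (cartanEntry M i)

theorem coroot_single (i j : B) : coroot M i (Finsupp.single j 1) = cartanEntry M i j := by
  simp [coroot]

theorem coroot_single_self (M : CoxeterMatrix B) (i : B) : coroot M i (Finsupp.single i 1) = 2 := by
  rw [coroot_single, cartanEntry_self]

theorem isLiftable_reflection_coroot :
    M.IsLiftable fun i ↦ reflection (coroot_single_self M i) := by
  intro i j
  obtain rfl | hij := eq_or_ne i j
  · rw [M.diagonal, pow_one]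
    exact LinearEquiv.ext (involutive_reflection (coroot_single_self M i))
  obtain infinite | two | three_le := entry_eq_zero_or_eq_two_or_three_le M hij
  · rw [infinite, pow_zero]
  · have orthogonal : cartanEntry M i j = 0 := by simp [cartanEntry, two]
    have orthogonal' : cartanEntry M j i = 0 := by rw [cartanEntry_comm, orthogonal]
    refine LinearEquiv.ext fun z ↦ ?_
    simp only [two, pow_two, LinearEquiv.mul_apply, reflection_apply, map_sub, map_smul,
      coroot_single, cartanEntry_self, orthogonal, orthogonal', LinearEquiv.coe_one, id]
    module
  · refine reflection_mul_reflection_pow_eq_one _ _ three_le ?_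
    rw [coroot_single, coroot_single, cartanEntry_comm j i, cartanEntry]
    ring

/-- The geometric representation of a Coxeter group, on the space `B →₀ ℝ` whose standard basis
vectors are the simple roots. -/
noncomputable def geomRep : W →* ((B →₀ ℝ) ≃ₗ[ℝ] (B →₀ ℝ)) :=
  cs.lift ⟨_, isLiftable_reflection_coroot⟩

theorem geomRep_simple_apply (i : B) (z : B →₀ ℝ) :
    geomRep cs (cs.simple i) z = z - coroot M i z • Finsupp.single i 1 := by
  rw [geomRep, cs.lift_apply_simple, reflection_apply]

theorem geomRep_simple_single_self (i : B) :
    geomRep cs (cs.simple i) (Finsupp.single i 1) = -Finsupp.single i 1 := by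
  rw [geomRep_simple_apply, coroot_single_self]
  module

variable {K : Set B} {j : B}

theorem geomRep_apply_apply_of_notMem {w : W} (hw : w ∈ parabolic cs K) (hj : j ∉ K)
    (z : B →₀ ℝ) : geomRep cs w z j = z j := by
  induction hw using Subgroup.closure_induction generalizing z with
  | mem x hx =>
    obtain ⟨i, hi, rfl⟩ := hx
    have : i ≠ j := fun h ↦ hj (h ▸ hi)
    simp [geomRep_simple_apply, this]
  | one => simp
  | mul x y _ _ ihx ihy => rw [map_mul, LinearEquiv.mul_apply, ihx, ihy]
  | inv x _ ihx =>
    rw [← ihx, ← LinearEquiv.mul_apply, ← map_mul, mul_inv_cancel, map_one, LinearEquiv.coe_one,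
      id]

theorem simple_mem_parabolic_iff : cs.simple j ∈ parabolic cs K ↔ j ∈ K := by
  refine ⟨fun mem ↦ ?_, simple_mem_parabolic cs⟩
  by_contra hj
  have := geomRep_apply_apply_of_notMem cs mem hj (Finsupp.single j 1)
  rw [geomRep_simple_single_self, Finsupp.neg_apply, Finsupp.single_eq_same] at this
  linarith

theorem simple_injective : Function.Injective cs.simple := by
  intro i j hij
  have mem : cs.simple i ∈ parabolic cs {j} :=
    hij ▸ simple_mem_parabolic cs (Set.mem_singleton j)
  exact Set.mem_singleton_iff.1 ((simple_mem_parabolic_iff cs).1 mem)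

theorem finite_of_spherical (hK : Spherical cs K) : K.Finite :=
  (Set.Finite.subset hK Subgroup.subset_closure).of_finite_image (simple_injective cs).injOn

theorem coroot_eq_zero_of_commute {x : W} (hx : x ∈ parabolic cs K) (hj : j ∉ K)
    (hcomm : Commute (cs.simple j) x) {z : B →₀ ℝ} (hz : geomRep cs x z = -z) :
    coroot M j z = 0 := by
  have z_j : z j = 0 := by
    have := geomRep_apply_apply_of_notMem cs hx hj z
    rw [hz, Finsupp.neg_apply] at this
    linarith
  have swap : geomRep cs x (geomRep cs (cs.simple j) z) j =
      geomRep cs (cs.simple j) (geomRep cs x z) j := by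
    rw [← LinearEquiv.mul_apply, ← LinearEquiv.mul_apply, ← map_mul, ← map_mul, hcomm.eq]
  rw [geomRep_apply_apply_of_notMem cs hx hj, hz, map_neg, geomRep_simple_apply] at swap
  simp only [Finsupp.neg_apply, Finsupp.sub_apply, Finsupp.smul_apply, Finsupp.single_eq_same,
    smul_eq_mul, mul_one, z_j] at swap
  linarith

theorem commute_simple_of_eq_two {i j : B} (h : M i j = 2) :
    Commute (cs.simple i) (cs.simple j) := by
  have := cs.simple_mul_simple_pow i j
  rw [h, pow_two, mul_eq_one_iff_eq_inv, mul_inv_rev, cs.inv_simple, cs.inv_simple] at this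
  exact this

theorem coroot_lt_zero {z : B →₀ ℝ} (hz : 0 ≤ z) (hj : z j = 0) {k : B} (hk : 0 < z k)
    (hjk : ¬ Commute (cs.simple j) (cs.simple k)) : coroot M j z < 0 := by
  rw [coroot, Finsupp.linearCombination_apply]
  refine Finset.sum_neg' (fun i hi ↦ ?_) ⟨k, Finsupp.mem_support_iff.2 hk.ne', ?_⟩
  · have hji : j ≠ i := by rintro rfl; exact Finsupp.mem_support_iff.1 hi hj
    exact mul_nonpos_of_nonneg_of_nonpos (hz i) (cartanEntry_nonpos hji)
  · have hjk' : j ≠ k := by rintro rfl; exact hk.ne' hj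
    exact mul_neg_of_pos_of_neg hk
      (cartanEntry_neg hjk' fun h ↦ hjk (commute_simple_of_eq_two cs h))

end GeometricRepresentation

/-! ### Growth words -/

section GrowthWord

/-- The word `j₁ ⋯ jₙ` is a *growth word* from `s` if its letters are pairwise distinct and distinct
from `s`, and each `sⱼ` for `j = jᵢ` fails to commute with the simple reflection of one of
`s, j₁, …, jᵢ₋₁`. Such a word enumerates the vertices of a connected subgraph of the Coxeter
diagram, starting at `s` and never leaving the part already reached. -/
inductive IsGrowthWord (cs : CoxeterSystem M W) (s : B) : List B → Prop
  | nil : IsGrowthWord cs s []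
  | concat {l : List B} {j k : B} (hl : IsGrowthWord cs s l) (hj : j ∉ s :: l) (hk : k ∈ s :: l)
      (hjk : ¬ Commute (cs.simple j) (cs.simple k)) : IsGrowthWord cs s (l ++ [j])

variable (s : B)

/-- The root `w⁻¹ α_s` of the reflection `w⁻¹ s w`. -/
noncomputable def conjRoot (w : W) : B →₀ ℝ :=
  geomRep cs w⁻¹ (Finsupp.single s 1)

theorem geomRep_conj_conjRoot (w : W) :
    geomRep cs (w⁻¹ * cs.simple s * w) (conjRoot cs s w) = -conjRoot cs s w := by
  rw [conjRoot, ← LinearEquiv.mul_apply, ← map_mul, mul_inv_cancel_right, map_mul,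
    LinearEquiv.mul_apply, geomRep_simple_single_self, map_neg]

theorem conjRoot_mul_simple (w : W) (j : B) :
    conjRoot cs s (w * cs.simple j) =
      conjRoot cs s w - coroot M j (conjRoot cs s w) • Finsupp.single j 1 := by
  rw [conjRoot, mul_inv_rev, cs.inv_simple, map_mul, LinearEquiv.mul_apply, geomRep_simple_apply,
    conjRoot]

variable {s} {l : List B}

theorem conjRoot_wordProd_apply_of_notMem {i : B} (hi : i ∉ s :: l) :
    conjRoot cs s (cs.wordProd l) i = 0 := by
  rw [List.mem_cons, not_or] at hi
  have prod_mem : cs.wordProd l ∈ parabolic cs {i | i ∈ l} := wordProd_mem_parabolic cs fun _ ↦ id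
  rw [conjRoot, geomRep_apply_apply_of_notMem cs (inv_mem prod_mem) hi.2,
    Finsupp.single_eq_of_ne hi.1]

theorem coroot_conjRoot_wordProd_lt_zero
    (hpos : ∀ i ∈ s :: l, 0 < conjRoot cs s (cs.wordProd l) i) {j k : B} (hj : j ∉ s :: l)
    (hk : k ∈ s :: l) (hjk : ¬ Commute (cs.simple j) (cs.simple k)) :
    coroot M j (conjRoot cs s (cs.wordProd l)) < 0 := by
  refine coroot_lt_zero cs (fun i ↦ ?_) (conjRoot_wordProd_apply_of_notMem cs hj) (hpos k hk) hjk
  by_cases hi : i ∈ s :: l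
  · exact (hpos i hi).le
  · exact (conjRoot_wordProd_apply_of_notMem cs hi).ge

namespace IsGrowthWord

variable {cs}

theorem nodup (hl : IsGrowthWord cs s l) : (s :: l).Nodup := by
  induction hl with
  | nil => exact List.nodup_singleton s
  | concat _ hj _ _ ih => simpa using ih.concat hj

theorem conjRoot_pos (hl : IsGrowthWord cs s l) :
    ∀ i ∈ s :: l, 0 < conjRoot cs s (cs.wordProd l) i := by
  induction hl with
  | nil => simp [conjRoot]
  | @concat l j k _ hj hk hjk ih =>
    have coroot_lt_zero := coroot_conjRoot_wordProd_lt_zero cs ih hj hk hjk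
    intro i hi
    rw [cs.wordProd_append, cs.wordProd_singleton, conjRoot_mul_simple]
    obtain rfl | hij := eq_or_ne i j
    · simpa [conjRoot_wordProd_apply_of_notMem cs hj] using coroot_lt_zero
    · have hi' : i ∈ s :: l := by simpa [hij] using hi
      simpa [hij] using ih i hi'

theorem length_conj_simple (hl : IsGrowthWord cs s l) :
    cs.length ((cs.wordProd l)⁻¹ * cs.simple s * cs.wordProd l) = 2 * l.length + 1 := by
  induction hl with
  | nil => simp
  | @concat l j k hl hj hk hjk ih =>
    set t := (cs.wordProd l)⁻¹ * cs.simple s * cs.wordProd l with ht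
    have t_mem : t ∈ parabolic cs {i | i ∈ s :: l} := by
      have prod_mem : cs.wordProd l ∈ parabolic cs {i | i ∈ s :: l} :=
        wordProd_mem_parabolic cs fun _ ↦ List.mem_cons_of_mem s
      exact mul_mem (mul_mem (inv_mem prod_mem) (simple_mem_parabolic cs List.mem_cons_self))
        prod_mem
    have not_commute : ¬ Commute (cs.simple j) t := fun hcomm ↦
      (coroot_conjRoot_wordProd_lt_zero cs hl.conjRoot_pos hj hk hjk).ne
        (coroot_eq_zero_of_commute cs t_mem hj hcomm (geomRep_conj_conjRoot cs s _))
    have conj_eq : (cs.wordProd (l ++ [j]))⁻¹ * cs.simple s * cs.wordProd (l ++ [j]) =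
        cs.simple j * t * cs.simple j := by
      simp [ht, cs.wordProd_append, mul_assoc]
    rw [conj_eq, length_simple_mul_mul_simple cs t_mem
      (mt (simple_mem_parabolic_iff cs).1 hj) not_commute, ih, List.length_append,
      List.length_singleton]
    ring

end IsGrowthWord

theorem isReduced_of_length_conj_simple
    (h : cs.length ((cs.wordProd l)⁻¹ * cs.simple s * cs.wordProd l) = 2 * l.length + 1) :
    cs.IsReduced l := by
  have conj_le := cs.length_mul_le ((cs.wordProd l)⁻¹ * cs.simple s) (cs.wordProd l)
  have half_le := cs.length_mul_le (cs.wordProd l)⁻¹ (cs.simple s)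
  have prod_le := cs.length_wordProd_le l
  rw [cs.length_inv, cs.length_simple] at half_le
  rw [CoxeterSystem.IsReduced]
  omega

variable {J : Set B}

theorem exists_not_commute_of_irreducibleSubset (hJ : IrreducibleSubset cs J) {K : Set B}
    (hK : K.Nonempty) (hKJ : K ⊂ J) :
    ∃ k ∈ K, ∃ j ∈ J \ K, ¬ Commute (cs.simple j) (cs.simple k) := by
  by_contra! commute
  exact hJ ⟨K, J \ K, hK, Set.nonempty_of_ssubset hKJ, Set.disjoint_sdiff_right,
    Set.union_sdiff_cancel hKJ.subset, fun k hk j hj ↦ (commute k hk j hj).symm⟩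

theorem IsGrowthWord.exists_extension (hJ : IrreducibleSubset cs J) (hfin : J.Finite)
    (hl : IsGrowthWord cs s l) (hlJ : {i | i ∈ s :: l} ⊆ J) :
    ∃ l', IsGrowthWord cs s l' ∧ {i | i ∈ s :: l'} = J := by
  induction missing : (J \ {i | i ∈ s :: l}).ncard using Nat.strong_induction_on generalizing l with
  | _ n ih =>
    obtain heq | hssub := hlJ.eq_or_ssubset
    · exact ⟨l, hl, heq⟩
    obtain ⟨k, hk, j, ⟨hjJ, hj⟩, hjk⟩ :=
      exists_not_commute_of_irreducibleSubset cs hJ ⟨s, List.mem_cons_self⟩ hssub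
    have letters_concat : {i | i ∈ s :: (l ++ [j])} = insert j {i | i ∈ s :: l} := by
      ext i
      simp only [Set.mem_ofPred_eq, Set.mem_insert_iff, List.mem_cons, List.mem_append,
        List.not_mem_nil, or_false]
      tauto
    refine ih _ ?_ (hl.concat hj hk hjk) ?_ rfl
    · rw [← missing, letters_concat, Set.insert_eq, Set.union_comm, ← Set.sdiff_sdiff]
      exact Set.ncard_sdiff_singleton_lt_of_mem ⟨hjJ, hj⟩ hfin.sdiff
    · rw [letters_concat]
      exact Set.insert_subset hjJ hlJ

theorem exists_isGrowthWord (hJ : IrreducibleSubset cs J) (hfin : J.Finite) (hs : s ∈ J) :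
    ∃ l, IsGrowthWord cs s l ∧ {i | i ∈ s :: l} = J :=
  IsGrowthWord.nil.exists_extension cs hJ hfin (by simpa using hs)

end GrowthWord

/-! ### Bases and supports -/

section Base

variable {cs} {J : Set B} {s : B}

theorem isBase_of_spherical (hJ : Spherical cs J) (hs : s ∈ J) {w : W} (hw : w ∈ parabolic cs J)
    (hlen : cs.length (w⁻¹ * cs.simple s * w) = 2 * cs.length w + 1) : IsBase cs s w := by
  refine ⟨hlen, fun t ht hlt ↦ Set.Finite.subset hJ ?_⟩
  rw [SetLike.coe_subset_coe, Subgroup.closure_le, Set.pair_subset_iff]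
  exact ⟨simple_mem_parabolic cs hs, mem_parabolic_of_isLeftInversion cs hw ⟨ht, hlt⟩⟩

variable (cs)

theorem subset_of_wordProd_mem_parabolic {K : Set B} {l : List B} (hl : l.Nodup)
    (hlK : cs.wordProd l ∈ parabolic cs K) : {i | i ∈ l} ⊆ K := by
  induction l with
  | nil => simp
  | cons a l ih =>
    rw [cs.wordProd_cons] at hlK
    obtain ⟨ha, hl⟩ := List.nodup_cons.1 hl
    have a_mem : a ∈ K ∪ {i | i ∈ l} := by
      rw [← simple_mem_parabolic_iff cs, ← mul_inv_cancel_right (cs.simple a) (cs.wordProd l)]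
      exact mul_mem (Subgroup.closure_mono (Set.image_mono Set.subset_union_left) hlK)
        (inv_mem (wordProd_mem_parabolic cs fun _ ↦ Or.inr))
    have aK : a ∈ K := a_mem.resolve_right ha
    have tail_subset := ih hl ((Subgroup.mul_mem_cancel_left _ (simple_mem_parabolic cs aK)).1 hlK)
    simpa [Set.subset_def] using ⟨aK, tail_subset⟩

theorem isSupport_wordProd (s : B) {l : List B} (hl : l.Nodup) :
    IsSupport cs s (cs.wordProd l) {i | i ∈ s :: l} := by
  refine ⟨List.mem_cons_self, wordProd_mem_parabolic cs fun _ ↦ List.mem_cons_of_mem s,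
    fun K hs hlK i hi ↦ ?_⟩
  obtain rfl | hi := List.mem_cons.1 hi
  · exact hs
  · exact subset_of_wordProd_mem_parabolic cs hl hlK hi

end Base

end SimpleBase

open SimpleBase in
theorem exists_simple_base_general (cs : CoxeterSystem M W) (J : Set B)
    (hirr : IrreducibleSubset cs J) (hsph : Spherical cs J) (s : B) (hs : s ∈ J) :
    ∃ w : W, IsSimpleBase cs s w ∧ IsSupport cs s w J := by
  obtain ⟨l, hl, rfl⟩ := exists_isGrowthWord cs hirr (finite_of_spherical cs hsph) hs
  obtain ⟨s_notMem, nodup⟩ := List.nodup_cons.1 hl.nodup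
  have support := isSupport_wordProd cs s nodup
  have reduced := isReduced_of_length_conj_simple cs hl.length_conj_simple
  have base := isBase_of_spherical hsph hs support.2.1 (by rw [hl.length_conj_simple, reduced.eq])
  exact ⟨cs.wordProd l, ⟨base, l, rfl, reduced.eq, nodup, s_notMem⟩, support⟩

/-- For every irreducible spherical subset `J` and every `s ∈ J` there is a
simple base with core `s` and support `J`. -/
theorem exists_simple_base
    [Finite B] (cs : CoxeterSystem M W) (J : Set B)
    (hirr : IrreducibleSubset cs J) (hsph : Spherical cs J)
    (s : B) (hs : s ∈ J) :
    ∃ w : W, IsSimpleBase cs s w ∧ IsSupport cs s w J :=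
  exists_simple_base_general cs J hirr hsph s hs
end
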